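/- Let A be a finite-dimensional left Leibniz algebra over a field F and let B be a subinvariant subalgebra of A with B² = B (i.e., B·B = B). Then B is an ideal of A. -/

import Mathlib

open Submodule

section LeibnizDefs

variable {F : Type*} {A : Type*} [Field F] [AddCommGroup A] [Module F A]

/-- The span of all products `b*c` with `b ∈ B`, `c ∈ C`. -/
def mulSub (mul : A →ₗ[F] A →ₗ[F] A) (B C : Submodule F A) : Submodule F A :=
  Submodule.span F {z : A | ∃ b ∈ B, ∃ c ∈ C, mul b c = z}

/-- `fSub mul B C = B·C + C·B`, the function `f(B,C)`. -/
def fSub (mul : A →ₗ[F] A →ₗ[F] A) (B C : Submodule F A) : Submodule F A :=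
  mulSub mul B C ⊔ mulSub mul C B

/-- `fIter mul B C n = f^{n+1}(B,C)` (so index `0` is `f^1(B,C) = f(B,C)`). -/
def fIter (mul : A →ₗ[F] A →ₗ[F] A) (B C : Submodule F A) : ℕ → Submodule F A
  | 0 => fSub mul B C
  | n + 1 => fSub mul B (fIter mul B C n)

/-- `lcs mul B n = B^{n+1}`, the lower central series (index `0` is `B^1 = B`). -/
def lcs (mul : A →ₗ[F] A →ₗ[F] A) (B : Submodule F A) : ℕ → Submodule F A
  | 0 => B
  | n + 1 => mulSub mul B (lcs mul B n)

/-- `ds mul B n = B^{(n+1)}`, the derived series (index `0` is `B^{(1)} = B`). -/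
def ds (mul : A →ₗ[F] A →ₗ[F] A) (B : Submodule F A) : ℕ → Submodule F A
  | 0 => B
  | n + 1 => mulSub mul (ds mul B n) (ds mul B n)

/-- `B^ω = ⋂_{i ≥ 1} B^i`. -/
def omegaSub (mul : A →ₗ[F] A →ₗ[F] A) (B : Submodule F A) : Submodule F A :=
  ⨅ n, lcs mul B n

/-- `B` is a subalgebra: a subspace closed under multiplication. -/
def IsSubalg (mul : A →ₗ[F] A →ₗ[F] A) (B : Submodule F A) : Prop :=
  ∀ x ∈ B, ∀ y ∈ B, mul x y ∈ B

/-- `I` is an ideal of the subalgebra `S`: `I ⊆ S` and `xI + Ix ⊆ I` for all `x ∈ S`. -/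
def IsIdealIn (mul : A →ₗ[F] A →ₗ[F] A) (I S : Submodule F A) : Prop :=
  I ≤ S ∧ ∀ x ∈ S, ∀ y ∈ I, mul x y ∈ I ∧ mul y x ∈ I

/-- `B` is subinvariant in `S`: there is a chain of subalgebras
`B = c 0 ⊆ c 1 ⊆ ⋯ ⊆ c t = S` with each term an ideal of the next. -/
def IsSubinvariantIn (mul : A →ₗ[F] A →ₗ[F] A) (B S : Submodule F A) : Prop :=
  ∃ (t : ℕ) (c : ℕ → Submodule F A), c 0 = B ∧ c t = S ∧
    (∀ i ≤ t, IsSubalg mul (c i)) ∧ ∀ i < t, IsIdealIn mul (c i) (c (i + 1))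

/-- `B` is nilpotent: `B^m = 0` for some `m`. -/
def IsNilpotentSub (mul : A →ₗ[F] A →ₗ[F] A) (B : Submodule F A) : Prop :=
  ∃ m, lcs mul B m = ⊥

/-- `B` is solvable: `B^{(m)} = 0` for some `m`. -/
def IsSolvableSub (mul : A →ₗ[F] A →ₗ[F] A) (B : Submodule F A) : Prop :=
  ∃ m, ds mul B m = ⊥

/-- The centralizer `Z_A(B) = {x : xb = 0 = bx for all b ∈ B}`. -/
def centralizerSet (mul : A →ₗ[F] A →ₗ[F] A) (B : Submodule F A) : Set A :=
  {x : A | ∀ b ∈ B, mul x b = 0 ∧ mul b x = 0}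

/-- `R` is the radical (the maximal solvable ideal) of the subalgebra `S`. -/
def IsRadicalIn (mul : A →ₗ[F] A →ₗ[F] A) (S R : Submodule F A) : Prop :=
  IsIdealIn mul R S ∧ IsSolvableSub mul R ∧
    ∀ T, IsIdealIn mul T S → IsSolvableSub mul T → T ≤ R

/-- `N` is the nilradical (the maximal nilpotent ideal) of the subalgebra `S`. -/
def IsNilradicalIn (mul : A →ₗ[F] A →ₗ[F] A) (S N : Submodule F A) : Prop :=
  IsIdealIn mul N S ∧ IsNilpotentSub mul N ∧
    ∀ T, IsIdealIn mul T S → IsNilpotentSub mul T → T ≤ N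

/-- `H` is a Cartan subalgebra: a nilpotent self-normalizing subalgebra. -/
def IsCartan (mul : A →ₗ[F] A →ₗ[F] A) (H : Submodule F A) : Prop :=
  IsSubalg mul H ∧ IsNilpotentSub mul H ∧
    ∀ x : A, (∀ h ∈ H, mul x h ∈ H ∧ mul h x ∈ H) → x ∈ H

/-- The subalgebra generated by a set: the smallest subalgebra containing it. -/
def subalgGen (mul : A →ₗ[F] A →ₗ[F] A) (s : Set A) : Submodule F A :=
  sInf {S : Submodule F A | IsSubalg mul S ∧ s ⊆ (S : Set A)}

end LeibnizDefs

/-!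
For `B` an ideal of `C` and `C` an ideal of `D`, the Leibniz identity moves `x ∈ D` onto a single
factor of `b * b'`, which multiplies `B` into `C`. The remaining product of an element of `C` and an
element of `B` lies in `B`, so `D` multiplies `B²` into `B`. When `B² = B` this makes `B` an ideal
of `D`, and the ideal property climbs the subinvariance chain one step at a time.
-/

section PerfectSubinvariant

variable {F A : Type*} [Field F] [AddCommGroup A] [Module F A]
  {mul : A →ₗ[F] A →ₗ[F] A} {B C D : Submodule F A}

theorem mulSub_eq_map₂ : mulSub mul B C = Submodule.map₂ mul B C :=
  (Submodule.map₂_eq_span_image2 mul B C).symm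

theorem mulSub_le : mulSub mul B C ≤ D ↔ ∀ b ∈ B, ∀ c ∈ C, mul b c ∈ D := by
  rw [mulSub_eq_map₂, Submodule.map₂_le]

theorem IsSubalg.isIdealIn_self (hB : IsSubalg mul B) : IsIdealIn mul B B :=
  ⟨le_rfl, fun x hx y hy => ⟨hB x hx y hy, hB y hy x hx⟩⟩

/-- The left Leibniz identity for a bilinear product: every left multiplication `mul x` is a
derivation. -/
def IsLeftLeibniz (mul : A →ₗ[F] A →ₗ[F] A) : Prop :=
  ∀ x y z : A, mul x (mul y z) = mul (mul x y) z + mul y (mul x z)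

theorem IsLeftLeibniz.mul_mul_eq_sub (hmul : IsLeftLeibniz mul) (x y z : A) :
    mul (mul x y) z = mul x (mul y z) - mul y (mul x z) :=
  eq_sub_of_add_eq (hmul x y z).symm

theorem IsIdealIn.mul_mem_of_mem_mulSub_self (hBC : IsIdealIn mul B C) (hCD : IsIdealIn mul C D)
    (hmul : IsLeftLeibniz mul) {x y : A} (hx : x ∈ D) (hy : y ∈ mulSub mul B B) :
    mul x y ∈ B ∧ mul y x ∈ B := by
  have left_mem : ∀ b ∈ B, mul x b ∈ C := fun b hb => (hCD.2 x hx b (hBC.1 hb)).1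
  have right_mem : ∀ b ∈ B, mul b x ∈ C := fun b hb => (hCD.2 x hx b (hBC.1 hb)).2
  have mulSub_le_comap : mulSub mul B B ≤ B.comap (mul x) ⊓ B.comap (mul.flip x) := by
    refine mulSub_le.2 fun b hb b' hb' => Submodule.mem_inf.2 ⟨?_, ?_⟩
    · rw [Submodule.mem_comap, hmul x b b']
      exact B.add_mem (hBC.2 _ (left_mem b hb) b' hb').1 (hBC.2 _ (left_mem b' hb') b hb).2
    · rw [Submodule.mem_comap, LinearMap.flip_apply, hmul.mul_mul_eq_sub b b' x]
      exact B.sub_mem (hBC.2 _ (right_mem b' hb') b hb).2 (hBC.2 _ (right_mem b hb) b' hb').2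
  exact mulSub_le_comap hy

theorem IsIdealIn.trans_of_le_mulSub_self (hBC : IsIdealIn mul B C) (hCD : IsIdealIn mul C D)
    (hmul : IsLeftLeibniz mul) (hB : B ≤ mulSub mul B B) : IsIdealIn mul B D :=
  ⟨hBC.1.trans hCD.1, fun _ hx _ hy => hBC.mul_mem_of_mem_mulSub_self hCD hmul hx (hB hy)⟩

theorem stmt_3_general (hmul : IsLeftLeibniz mul) (hBD : IsSubinvariantIn mul B D)
    (hB : mulSub mul B B = B) : IsIdealIn mul B D := by
  obtain ⟨t, c, rfl, rfl, hsubalg, hideal⟩ := hBD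
  have isIdealIn_chain : ∀ i ≤ t, IsIdealIn mul (c 0) (c i) := by
    intro i hi
    induction i with
    | zero => exact (hsubalg 0 hi).isIdealIn_self
    | succ i ih =>
      exact (ih (Nat.le_of_succ_le hi)).trans_of_le_mulSub_self (hideal i hi) hmul hB.ge
  exact isIdealIn_chain t le_rfl

end PerfectSubinvariant

/-- a subinvariant subalgebra `B` with `B² = B` is an ideal of `A`. -/
theorem stmt_3 {F A : Type*} [Field F] [AddCommGroup A] [Module F A] [FiniteDimensional F A]
    (mul : A →ₗ[F] A →ₗ[F] A)
    (hleib : ∀ x y z : A, mul x (mul y z) = mul (mul x y) z + mul y (mul x z))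
    (B : Submodule F A) (hB : IsSubinvariantIn mul B ⊤)
    (hB2 : mulSub mul B B = B) :
    IsIdealIn mul B ⊤ :=
  stmt_3_general hleib hB hB2
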